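/- Let A ∈ ℂ^{m×n} be given and let s, t be integers with 0 ≤ s ≤ t ≤ min{m, n}. Then (1) the maximum of r(A + X) over all X ∈ ℂ^{m×n} with s ≤ r(X) ≤ t equals min{ m, n, r(A) + t }, and (2) the minimum of r(A + X) over all X ∈ ℂ^{m×n} with s ≤ r(X) ≤ t equals max{ 0, s − r(A), r(A) − t }; both extremal values are attained by matrices X satisfying the rank constraint. -/

import Mathlib

open Matrix

/-!
With `p = min m n` and `r = A.rank`, the matrix `A` has a normal form
`A = Uᵀ * diagonal (1_{k < r}) * V`, where `U : p × m` and `V : p × n` have linearly independent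
rows (`exists_normal_form`): take a rank factorization `A = C * R` and extend the `r` columns of `C`
and the `r` rows of `R` to linearly independent families of size `p`.

Since `U` and `V` have right inverses, `w ↦ Uᵀ * diagonal w * V` is an additive map under which the
rank is the number of nonzero entries of `w` (`rank_transpose_mul_diagonal_mul`). So both extremal
values are attained by matrices `X` diagonal in the same normal form, and their ranks are obtained
by counting: for the maximum, `X` has its `t` ones at the end of the diagonal, overlapping the ones
of `A` as little as possible; for the minimum, `X` has `q = max s (min r t)` entries `-1` at the
beginning, leaving `|r - q|` nonzero entries in `A + X`.

The two bounds are subadditivity of the rank.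
-/

lemma rank_add_le_add {m n : ℕ} (A B : Matrix (Fin m) (Fin n) ℂ) :
    (A + B).rank ≤ A.rank + B.rank := by
  unfold Matrix.rank
  rw [Matrix.mulVecLin_add]
  exact (Submodule.finrank_mono (LinearMap.range_add_le _ _)).trans
    (Submodule.finrank_add_le_finrank_add_finrank _ _)

lemma rank_neg_eq {m n : ℕ} (A : Matrix (Fin m) (Fin n) ℂ) : (-A).rank = A.rank := by
  have h : (-A).mulVecLin = -A.mulVecLin := by
    ext1 x
    ext
    simp
  unfold Matrix.rank
  rw [h, LinearMap.range_neg]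

lemma exists_extend_linearIndependent {N r : ℕ} (v : Fin r → Fin N → ℂ)
    (hv : LinearIndependent ℂ v) (p : ℕ) (hrp : r ≤ p) (hp : p ≤ N) :
    ∃ e : Fin p → Fin N → ℂ, LinearIndependent ℂ e ∧ ∀ i : Fin r, e (Fin.castLE hrp i) = v i := by
  induction p, hrp using Nat.le_induction with
  | base => exact ⟨v, hv, fun i => rfl⟩
  | succ q hq ih =>
    obtain ⟨e, he, hev⟩ := ih (by omega)
    obtain ⟨x, hx⟩ := exists_linearIndependent_snoc_of_lt_finrank he
      (by rw [Module.finrank_fin_fun]; omega)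
    refine ⟨_, hx, fun i => ?_⟩
    rw [← hev i]
    exact Fin.snoc_castSucc (α := fun _ => Fin N → ℂ) x e (Fin.castLE hq i)

lemma exists_right_inverse_of_row {p N : ℕ} (V : Matrix (Fin p) (Fin N) ℂ)
    (hV : LinearIndependent ℂ V.row) : ∃ W : Matrix (Fin N) (Fin p) ℂ, V * W = 1 := by
  rw [← Matrix.mulVec_surjective_iff_exists_right_inverse]
  have h : LinearMap.range V.mulVecLin = ⊤ := by
    apply Submodule.eq_top_of_finrank_eq
    rw [← Matrix.rank, hV.rank_matrix]
    simp
  exact LinearMap.range_eq_top.mp h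

lemma linearIndependent_row_of_le_rank {p N : ℕ} (V : Matrix (Fin p) (Fin N) ℂ)
    (hV : p ≤ V.rank) : LinearIndependent ℂ V.row := by
  rw [linearIndependent_iff_card_eq_finrank_span, Set.finrank, ← V.rank_eq_finrank_span_row]
  have := V.rank_le_height
  simp only [Fintype.card_fin]
  omega

lemma exists_rank_factorization {m n : ℕ} (A : Matrix (Fin m) (Fin n) ℂ) :
    ∃ (C : Matrix (Fin m) (Fin A.rank) ℂ) (R : Matrix (Fin A.rank) (Fin n) ℂ), A = C * R := by
  let b : Module.Basis (Fin A.rank) ℂ (LinearMap.range A.mulVecLin) := Module.finBasis ℂ _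
  -- The columns of `C` are a basis of the column space, those of `R` are coordinates in it.
  refine ⟨.of fun i k => (b k : Fin m → ℂ) i,
    .of fun k j => b.repr (A.mulVecLin.rangeRestrict (Pi.single j 1)) k, ?_⟩
  ext i j
  have h := congrArg (fun y : LinearMap.range A.mulVecLin => (y : Fin m → ℂ) i)
    (b.sum_repr (A.mulVecLin.rangeRestrict (Pi.single j 1)))
  rw [Submodule.coe_sum, Finset.sum_apply] at h
  simpa [Matrix.mul_apply, mul_comm] using h.symm

/-- Simultaneous normal form: `A` is diagonal, with `A.rank` leading ones, with respect to two
linearly independent families of the maximal common size `min m n`. -/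
lemma exists_normal_form {m n : ℕ} (A : Matrix (Fin m) (Fin n) ℂ) :
    ∃ (U : Matrix (Fin (min m n)) (Fin m) ℂ) (V : Matrix (Fin (min m n)) (Fin n) ℂ),
      LinearIndependent ℂ U.row ∧ LinearIndependent ℂ V.row ∧
      A = Uᵀ * diagonal (fun k : Fin (min m n) => if k.val < A.rank then (1 : ℂ) else 0) * V := by
  obtain ⟨C, R, hCR⟩ := exists_rank_factorization A
  have hr : A.rank ≤ min m n := le_min A.rank_le_height A.rank_le_width
  have hC : LinearIndependent ℂ Cᵀ.row := by
    apply linearIndependent_row_of_le_rank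
    rw [rank_transpose]
    conv_lhs => rw [hCR]
    exact rank_mul_le_left C R
  have hR : LinearIndependent ℂ R.row := by
    apply linearIndependent_row_of_le_rank
    conv_lhs => rw [hCR]
    exact rank_mul_le_right C R
  obtain ⟨U, hU, hUC⟩ := exists_extend_linearIndependent Cᵀ.row hC _ hr (min_le_left _ _)
  obtain ⟨V, hV, hVR⟩ := exists_extend_linearIndependent R.row hR _ hr (min_le_right _ _)
  refine ⟨.of U, .of V, hU, hV, ?_⟩
  ext i j
  conv_lhs => rw [hCR]
  rw [Matrix.mul_apply, Matrix.mul_apply]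
  simp only [Matrix.mul_diagonal, Matrix.transpose_apply, Matrix.of_apply]
  -- The terms outside the range of `Fin.castLE hr` vanish.
  refine Finset.sum_of_injOn (Fin.castLE hr) (Fin.castLE_injective hr).injOn (by simp) ?_ ?_
  · intro k _ hk
    have : ¬ k.val < A.rank := fun h => hk ⟨⟨k, h⟩, by simp, rfl⟩
    simp [this]
  · intro k _
    have h1 := congrFun (hUC k) i
    have h2 := congrFun (hVR k) j
    simp only [Matrix.row, Matrix.transpose_apply] at h1 h2
    simp [h1, h2]

lemma rank_transpose_mul_diagonal_mul {p m n : ℕ} (U : Matrix (Fin p) (Fin m) ℂ)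
    (V : Matrix (Fin p) (Fin n) ℂ) (hU : LinearIndependent ℂ U.row)
    (hV : LinearIndependent ℂ V.row) (w : Fin p → ℂ) :
    (Uᵀ * diagonal w * V).rank = (Finset.univ.filter fun k => w k ≠ 0).card := by
  obtain ⟨U', hU'⟩ := exists_right_inverse_of_row U hU
  obtain ⟨V', hV'⟩ := exists_right_inverse_of_row V hV
  have hd : (diagonal w).rank = (Finset.univ.filter fun k => w k ≠ 0).card := by
    classical
    rw [rank_diagonal, Fintype.card_subtype]
  rw [← hd]
  apply le_antisymm
  · exact (rank_mul_le_left _ _).trans (rank_mul_le_right _ _)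
  · have h : diagonal w = U'ᵀ * ((Uᵀ * diagonal w * V) * V') := by
      have hU'' : U'ᵀ * Uᵀ = 1 := by rw [← transpose_mul, hU', transpose_one]
      rw [Matrix.mul_assoc _ V V', hV', Matrix.mul_one, ← Matrix.mul_assoc, hU'', Matrix.one_mul]
    conv_lhs => rw [h]
    exact (rank_mul_le_right _ _).trans (rank_mul_le_left _ _)

lemma card_filter_Ico {p : ℕ} (P : Fin p → Prop) [DecidablePred P] (a b : ℕ) (hb : b ≤ p)
    (h : ∀ k : Fin p, P k ↔ a ≤ k.val ∧ k.val < b) :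
    (Finset.univ.filter P).card = b - a := by
  rw [← Nat.card_Ico, ← Finset.card_map Fin.valEmbedding]
  congr 1
  ext x
  simp only [Finset.mem_map, Finset.mem_filter, Finset.mem_univ, true_and, Fin.valEmbedding_apply,
    Finset.mem_Ico, h]
  constructor
  · rintro ⟨k, hk, rfl⟩
    exact hk
  · intro hx
    exact ⟨⟨x, by omega⟩, hx, rfl⟩

theorem stmt8 (m n s t : ℕ) (hst : s ≤ t) (ht : t ≤ min m n)
    (A : Matrix (Fin m) (Fin n) ℂ) :
    (∀ X : Matrix (Fin m) (Fin n) ℂ, s ≤ X.rank → X.rank ≤ t →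
      (A + X).rank ≤ min (min m n) (A.rank + t)) ∧
    (∃ X : Matrix (Fin m) (Fin n) ℂ, s ≤ X.rank ∧ X.rank ≤ t ∧
      (A + X).rank = min (min m n) (A.rank + t)) ∧
    (∀ X : Matrix (Fin m) (Fin n) ℂ, s ≤ X.rank → X.rank ≤ t →
      max 0 (max ((s : ℤ) - (A.rank : ℤ)) ((A.rank : ℤ) - (t : ℤ)))
        ≤ ((A + X).rank : ℤ)) ∧
    (∃ X : Matrix (Fin m) (Fin n) ℂ, s ≤ X.rank ∧ X.rank ≤ t ∧
      ((A + X).rank : ℤ)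
        = max 0 (max ((s : ℤ) - (A.rank : ℤ)) ((A.rank : ℤ) - (t : ℤ)))) := by
  have hr : A.rank ≤ min m n := le_min A.rank_le_height A.rank_le_width
  obtain ⟨U, V, hU, hV, hA⟩ := exists_normal_form A
  have hrank := rank_transpose_mul_diagonal_mul U V hU hV
  have hsum : ∀ w, A + Uᵀ * diagonal w * V =
      Uᵀ * diagonal (fun k : Fin (min m n) => (if k.val < A.rank then (1 : ℂ) else 0) + w k) * V := by
    intro w
    conv_lhs => rw [hA]
    rw [← Matrix.add_mul, ← Matrix.mul_add, diagonal_add]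
  refine ⟨fun X _ hX => ?_, ?_, fun X hsX hXt => ?_, ?_⟩
  · exact le_min (le_min (A + X).rank_le_height (A + X).rank_le_width)
      ((rank_add_le_add A X).trans (by omega))
  · refine ⟨Uᵀ * diagonal (fun k : Fin (min m n) => if min m n - t ≤ k.val then (1 : ℂ) else 0) * V, ?_⟩
    rw [hsum, hrank, hrank, card_filter_Ico _ (min m n - t) (min m n) le_rfl
      (fun k => by have := k.isLt; split_ifs <;> simp <;> omega)]
    refine ⟨by omega, by omega, ?_⟩
    -- The zeros in the diagonal form of `A + X` are the indices in `[A.rank, min m n - t)`.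
    have hzero := card_filter_Ico (fun k : Fin (min m n) =>
      ¬ ((if k.val < A.rank then (1 : ℂ) else 0) + if min m n - t ≤ k.val then 1 else 0) ≠ 0)
      A.rank (min m n - t) (by omega) (fun k => by split_ifs <;> norm_num <;> omega)
    have htotal := Finset.card_filter_add_card_filter_not
      (s := (Finset.univ : Finset (Fin (min m n))))
      (fun k => ((if k.val < A.rank then (1 : ℂ) else 0) + if min m n - t ≤ k.val then 1 else 0) ≠ 0)
    rw [hzero, Finset.card_univ, Fintype.card_fin] at htotal
    omega
  · have h1 := rank_add_le_add (A + X) (-A)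
    have h2 := rank_add_le_add (A + X) (-X)
    rw [rank_neg_eq, add_neg_cancel_comm] at h1
    rw [rank_neg_eq, add_neg_cancel_right] at h2
    omega
  · obtain ⟨q, hq⟩ : ∃ q, q = max s (min A.rank t) := ⟨_, rfl⟩
    -- The number `q` of entries `-1` is the element of `[s, t]` closest to `A.rank`.
    refine ⟨Uᵀ * diagonal (fun k : Fin (min m n) => if k.val < q then (-1 : ℂ) else 0) * V, ?_⟩
    rw [hsum, hrank, hrank, card_filter_Ico _ 0 q (by omega) (fun k => by split_ifs <;> simp <;> omega),
      card_filter_Ico _ (min A.rank q) (max A.rank q) (by omega)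
        (fun k => by split_ifs <;> norm_num <;> omega)]
    refine ⟨by omega, by omega, by omega⟩
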